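/- Let P(z) = ∑_{j=0}^{n} a_j z^j be a complex polynomial of degree n > 2 all of whose zeros lie in |z| ≤ k with k ≥ 1. Then max_{|z|=1}|P′(z)| ≥ (1/(1+k^n))·(n + (k^n|a_n| − |a_0|)/(k^n|a_n| + |a_0|))·max_{|z|=1}|P(z)| + (|a_{n−1}|/(k(1+k^n)))·(n + (k^n|a_n| − |a_0|)/(k^n|a_n| + |a_0|))·((k^n − 1)/n − (k^{n−2} − 1)/(n−2)) + |a_1|·(1 − 1/k^2). -/

import Mathlib

/-!
Let `M(f, r)` be the maximum of `|f|` over `|z| = r`. For `f = ∑ fⱼ zʲ` of degree at most `N` with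
`N ≥ 2`, and for `|a| ≤ 1` and `|η| = 1`, there is a unitary `U`, independent of `f`, such that
`f(a) + η (1 - |a|²) f_N` is a matrix entry of `f(U)`; as `‖f(U)‖ ≤ M(f, 1)`, a suitable `η` gives
`|f(a)| + (1 - |a|²) |f_N| ≤ M(f, 1)`, and for the reversed polynomial
`M(f, R) + (R^N - R^(N-2)) |f₀| ≤ R^N M(f, 1)` when `R ≥ 1`.

Applied to `P'`, this bounds `M(P', 1)` below in terms of `M(P', k)` and `|a₁|`. On `|z| = k` the
real part of the logarithmic derivative, a sum over the zeros, gives Dubinin's inequality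
`S M(P, k) ≤ 2 k M(P', k)`, where `S = n + (kⁿ|aₙ| - |a₀|) / (kⁿ|aₙ| + |a₀|)`.

It remains to compare `M(P, k)` with `M(P, 1)`. The polynomial `q(z) = zⁿ P(k / z)` has no zeros in
`|z| < 1`, so the Erdős–Lax inequality bounds `M(q', 1)` by `n M(q, 1) / 2`; inserting this in the
growth estimate for `q'` and integrating along the radii up to `|z| = k` yields a refinement of the
Ankeny–Rivlin inequality, which reads back as the required bound.
-/

open Polynomial Metric

/-- The maximum of `|P(z)|` over the circle `|z| = r`. -/
noncomputable def maxMod (P : Polynomial ℂ) (r : ℝ) : ℝ :=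
  ⨆ z : sphere (0 : ℂ) r, ‖P.eval (z : ℂ)‖

open ComplexConjugate

section MaxMod

variable {p : ℂ[X]} {r : ℝ}

lemma norm_eval_le_maxMod {z : ℂ} (hz : ‖z‖ = r) : ‖p.eval z‖ ≤ maxMod p r := by
  have hcont : Continuous fun z : sphere (0 : ℂ) r => ‖p.eval (z : ℂ)‖ := by fun_prop
  exact le_ciSup (isCompact_range hcont).bddAbove ⟨z, by simpa using hz⟩

lemma maxMod_le (hr : 0 ≤ r) {M : ℝ} (hM : ∀ z : ℂ, ‖z‖ = r → ‖p.eval z‖ ≤ M) :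
    maxMod p r ≤ M := by
  have : Nonempty (sphere (0 : ℂ) r) := (NormedSpace.sphere_nonempty.2 hr).to_subtype
  exact ciSup_le fun z => hM z (by simp)

lemma exists_norm_eval_eq_maxMod (p : ℂ[X]) (hr : 0 ≤ r) :
    ∃ z : ℂ, ‖z‖ = r ∧ ‖p.eval z‖ = maxMod p r := by
  obtain ⟨z, hz, hmax⟩ := (isCompact_sphere (0 : ℂ) r).exists_isMaxOn
    (NormedSpace.sphere_nonempty.2 hr) (f := fun z => ‖p.eval z‖) (by fun_prop)
  rw [mem_sphere_zero_iff_norm] at hz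
  exact ⟨z, hz, (norm_eval_le_maxMod hz).antisymm <|
    maxMod_le hr fun w hw => hmax (mem_sphere_zero_iff_norm.2 hw)⟩

lemma norm_eval_le_maxMod_of_norm_le {z : ℂ} (hz : ‖z‖ ≤ r) : ‖p.eval z‖ ≤ maxMod p r := by
  rcases hz.eq_or_lt with hz | hz
  · exact norm_eval_le_maxMod hz
  have hr : r ≠ 0 := ((norm_nonneg z).trans_lt hz).ne'
  refine Complex.norm_le_of_forall_mem_frontier_norm_le (f := fun z => p.eval z)
    (isBounded_ball (x := 0) (r := r)) p.differentiable.diffContOnCl (fun w hw => ?_)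
    (subset_closure (mem_ball_zero_iff.2 hz))
  rw [frontier_ball _ hr, mem_sphere_zero_iff_norm] at hw
  exact norm_eval_le_maxMod hw

lemma maxMod_comp_C_mul_X (p : ℂ[X]) {c : ℂ} (hc : c ≠ 0) (hr : 0 ≤ r) :
    maxMod (p.comp (C c * X)) r = maxMod p (‖c‖ * r) := by
  refine le_antisymm (maxMod_le hr fun z hz => ?_)
    (maxMod_le (by positivity) fun z hz => ?_)
  · rw [eval_comp, eval_C_mul, eval_X]
    exact norm_eval_le_maxMod (by rw [norm_mul, hz])
  · have hcz : ‖c⁻¹ * z‖ = r := by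
      rw [norm_mul, norm_inv, hz, inv_mul_cancel_left₀ (norm_ne_zero_iff.2 hc)]
    have heval : (p.comp (C c * X)).eval (c⁻¹ * z) = p.eval z := by
      rw [eval_comp, eval_C_mul, eval_X, mul_inv_cancel_left₀ hc]
    exact heval ▸ norm_eval_le_maxMod hcz

end MaxMod

section Reflect

variable {p : ℂ[X]} {N : ℕ}

lemma eval_reflect (hp : p.natDegree ≤ N) {z : ℂ} (hz : z ≠ 0) :
    (reflect N p).eval z = z ^ N * p.eval z⁻¹ := by
  let := invertibleOfNonzero (inv_ne_zero hz)
  have hrefl := eval₂_reflect_mul_pow (RingHom.id ℂ) z⁻¹ N p hp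
  rw [invOf_eq_inv, inv_inv, ← eval, ← eval, inv_pow] at hrefl
  rw [← hrefl, mul_left_comm, mul_inv_cancel₀ (pow_ne_zero N hz), mul_one]

lemma inv_le_norm_of_isRoot_reverse (hp : p ≠ 0) {r : ℝ}
    (hroots : ∀ w, p.IsRoot w → ‖w‖ ≤ r) {w : ℂ} (hw : p.reverse.IsRoot w) : r⁻¹ ≤ ‖w‖ := by
  have hw₀ : w ≠ 0 := by
    rintro rfl
    rw [IsRoot, ← coeff_zero_eq_eval_zero, coeff_zero_reverse, leadingCoeff_eq_zero] at hw
    exact hp hw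
  rw [IsRoot, reverse, eval_reflect le_rfl hw₀] at hw
  have hle := hroots w⁻¹ ((mul_eq_zero.1 hw).resolve_left (pow_ne_zero _ hw₀))
  rw [norm_inv] at hle
  exact inv_le_of_inv_le₀ (norm_pos_iff.2 hw₀) hle

lemma maxMod_reflect (hp : p.natDegree ≤ N) {r : ℝ} (hr : 0 < r) :
    maxMod (reflect N p) r = r ^ N * maxMod p r⁻¹ := by
  have h_le {q : ℂ[X]} (hq : q.natDegree ≤ N) {s : ℝ} (hs : 0 < s) :
      maxMod (reflect N q) s ≤ s ^ N * maxMod q s⁻¹ := by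
    refine maxMod_le hs.le fun z hz => ?_
    rw [eval_reflect hq (norm_ne_zero_iff.1 (hz ▸ hs.ne')), norm_mul, norm_pow, hz]
    gcongr
    exact norm_eval_le_maxMod (by rw [norm_inv, hz])
  refine (h_le hp hr).antisymm ?_
  have h_ge := h_le (natDegree_reflect_le.trans (max_le le_rfl hp)) (inv_pos.2 hr)
  rwa [reflect_reflect, inv_inv, inv_pow, ← div_eq_inv_mul, le_div_iff₀' (pow_pos hr N)] at h_ge

end Reflect

lemma exists_norm_eq_one_norm_add_mul (x y : ℂ) :
    ∃ c : ℂ, ‖c‖ = 1 ∧ ‖x + c * y‖ = ‖x‖ + ‖y‖ := by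
  obtain ⟨b, hb, hbx⟩ := RCLike.exists_norm_mul_eq_self x
  obtain ⟨c, hc, hcy⟩ := RCLike.exists_norm_eq_mul_self y
  refine ⟨b * c, by rw [norm_mul, hb, hc, one_mul], ?_⟩
  have hsum : x + b * c * y = b * ((‖x‖ + ‖y‖ : ℝ) : ℂ) := by
    push_cast
    linear_combination b * hcy.symm - hbx
  rw [hsum, norm_mul, hb, one_mul, Complex.norm_real, Real.norm_of_nonneg (by positivity)]

theorem norm_aeval_le_maxMod_of_mem_unitary {A : Type*} [CStarAlgebra A] {u : A}
    (hu : u ∈ unitary A) (p : ℂ[X]) : ‖aeval u p‖ ≤ maxMod p 1 := by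
  have := isStarNormal_of_mem_unitary hu
  rw [← cfc_polynomial p u]
  exact norm_cfc_le ((norm_nonneg _).trans (norm_eval_le_maxMod norm_one)) fun z hz =>
    norm_eval_le_maxMod (spectrum.norm_eq_one_of_unitary hu hz)

lemma norm_sq_add_norm_sq_rotation (a x y : ℂ) (s : ℝ) :
    ‖a * x + s * y‖ ^ 2 + ‖s * x - conj a * y‖ ^ 2 =
      (‖a‖ ^ 2 + s ^ 2) * (‖x‖ ^ 2 + ‖y‖ ^ 2) := by
  simp only [Complex.sq_norm, Complex.normSq_apply, Complex.add_re, Complex.add_im,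
    Complex.sub_re, Complex.sub_im, Complex.mul_re, Complex.mul_im, Complex.ofReal_re,
    Complex.ofReal_im, Complex.conj_re, Complex.conj_im]
  ring

/-- For `‖a‖ ≤ 1` and `‖η‖ = 1`, the unitary with `e₀ ↦ a e₀ + s e₁`, `eᵢ ↦ eᵢ₊₁` for
`0 < i ≤ d`, and `e_{d+1} ↦ η (s e₀ - ā e₁)`, where `s = √(1 - ‖a‖²)`. Its `(0, 0)` matrix
coefficient sends the powers `j ≤ d + 1` to `aʲ`, and the power `d + 2` to
`a ^ (d + 2) + η (1 - ‖a‖²)`. -/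
noncomputable def rotShift (d : ℕ) (a η : ℂ) :
    EuclideanSpace ℂ (Fin (d + 2)) →ₗ[ℂ] EuclideanSpace ℂ (Fin (d + 2)) where
  toFun v := WithLp.toLp 2 <|
    Fin.cons (a * v 0 + √(1 - ‖a‖ ^ 2) * (η * v (Fin.last _))) <|
      Fin.cons (√(1 - ‖a‖ ^ 2) * v 0 - conj a * (η * v (Fin.last _)))
        fun i : Fin d => v i.castSucc.succ
  map_add' v w := by
    ext i
    refine Fin.cases ?_ (Fin.cases ?_ fun _ => ?_) i <;> simp <;> ring
  map_smul' c v := by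
    ext i
    refine Fin.cases ?_ (Fin.cases ?_ fun _ => ?_) i <;> simp <;> ring

namespace rotShift

variable {d : ℕ} {a η : ℂ}

lemma norm_apply (ha : ‖a‖ ≤ 1) (hη : ‖η‖ = 1) (v : EuclideanSpace ℂ (Fin (d + 2))) :
    ‖rotShift d a η v‖ = ‖v‖ := by
  have hs : ‖a‖ ^ 2 + √(1 - ‖a‖ ^ 2) ^ 2 = 1 := by
    rw [Real.sq_sqrt (sub_nonneg.2 (pow_le_one₀ (norm_nonneg a) ha)), add_sub_cancel]
  have hrot := norm_sq_add_norm_sq_rotation a (v 0) (η * v (Fin.last _)) √(1 - ‖a‖ ^ 2)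
  rw [hs, one_mul, norm_mul, hη, one_mul] at hrot
  rw [← sq_eq_sq₀ (norm_nonneg _) (norm_nonneg _), EuclideanSpace.norm_sq_eq,
    EuclideanSpace.norm_sq_eq, Fin.sum_univ_succ, Fin.sum_univ_succ, ← add_assoc,
    Fin.sum_univ_succ (n := d + 1), Fin.sum_univ_castSucc, Fin.succ_last, add_comm (∑ _, _),
    ← add_assoc]
  exact congrArg (· + _) hrot

lemma toContinuousLinearMap_mem_unitary (ha : ‖a‖ ≤ 1) (hη : ‖η‖ = 1) :
    Module.End.toContinuousLinearMap _ (rotShift d a η) ∈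
      unitary (EuclideanSpace ℂ (Fin (d + 2)) →L[ℂ] EuclideanSpace ℂ (Fin (d + 2))) :=
  (Unitary.linearIsometryEquiv.symm <| LinearIsometry.toLinearIsometryEquiv
    ⟨rotShift d a η, norm_apply ha hη⟩ rfl).2

lemma pow_apply_single (a η : ℂ) {j : ℕ} (hj : j ≤ d + 1) :
    (rotShift d a η ^ j) (EuclideanSpace.single 0 1) = WithLp.toLp 2
      (Fin.cons (a ^ j) fun i : Fin (d + 1) =>
        if (i : ℕ) < j then √(1 - ‖a‖ ^ 2) * a ^ (j - 1 - i) else 0) := by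
  induction j with
  | zero =>
    ext i
    refine Fin.cases ?_ (fun _ => ?_) i <;> simp
  | succ j ih =>
    have hjd : ¬ d < j := by omega
    rw [pow_succ', Module.End.mul_apply, ih (by omega)]
    ext i
    refine Fin.cases ?_ (Fin.cases ?_ fun i => ?_) i
    · simp [rotShift, ← Fin.succ_last, hjd, pow_succ']
    · simp [rotShift, ← Fin.succ_last, hjd]
    · simp [rotShift, Nat.sub_sub, add_comm]

lemma pow_last_apply_single_zero (ha : ‖a‖ ≤ 1) (η : ℂ) :
    (rotShift d a η ^ (d + 2)) (EuclideanSpace.single 0 1) 0 =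
      a ^ (d + 2) + η * (1 - ‖a‖ ^ 2 : ℝ) := by
  rw [← Real.mul_self_sqrt (sub_nonneg.2 (pow_le_one₀ (norm_nonneg a) ha)), pow_succ',
    Module.End.mul_apply, pow_apply_single a η le_rfl]
  simp [rotShift, ← Fin.succ_last]
  ring

lemma aeval_apply_single_zero (ha : ‖a‖ ≤ 1) (η : ℂ) {p : ℂ[X]} (hp : p.natDegree ≤ d + 2) :
    aeval (rotShift d a η) p (EuclideanSpace.single 0 1) 0 =
      p.eval a + η * ((1 - ‖a‖ ^ 2 : ℝ) * p.coeff (d + 2)) := by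
  have hpow {j : ℕ} (hj : j < d + 2) :
      (rotShift d a η ^ j) (EuclideanSpace.single 0 1) 0 = a ^ j := by
    rw [pow_apply_single a η (Nat.le_of_lt_succ hj)]
    rfl
  have hdeg : p.natDegree < d + 3 := Nat.lt_succ_of_le hp
  rw [aeval_eq_sum_range' hdeg, eval_eq_sum_range' hdeg, Finset.sum_range_succ,
    Finset.sum_range_succ _ (d + 2)]
  simp only [LinearMap.add_apply, LinearMap.sum_apply, LinearMap.smul_apply, PiLp.add_apply,
    WithLp.ofLp_sum, Finset.sum_apply, PiLp.smul_apply, smul_eq_mul, pow_last_apply_single_zero ha]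
  rw [Finset.sum_congr rfl fun j hj => by rw [hpow (Finset.mem_range.1 hj)]]
  ring

end rotShift

theorem norm_eval_add_mul_norm_coeff_le_maxMod {N : ℕ} (hN : 2 ≤ N) {p : ℂ[X]}
    (hp : p.natDegree ≤ N) {a : ℂ} (ha : ‖a‖ ≤ 1) :
    ‖p.eval a‖ + (1 - ‖a‖ ^ 2) * ‖p.coeff N‖ ≤ maxMod p 1 := by
  obtain ⟨d, rfl⟩ := Nat.exists_eq_add_of_le' hN
  obtain ⟨η, hη, hadd⟩ :=
    exists_norm_eq_one_norm_add_mul (p.eval a) ((1 - ‖a‖ ^ 2 : ℝ) * p.coeff (d + 2))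
  have ha₂ : 0 ≤ 1 - ‖a‖ ^ 2 := sub_nonneg.2 (pow_le_one₀ (norm_nonneg a) ha)
  rw [norm_mul, Complex.norm_real, Real.norm_of_nonneg ha₂] at hadd
  set u := Module.End.toContinuousLinearMap _ (rotShift d a η)
  have hu : aeval u p (EuclideanSpace.single 0 1) =
      aeval (rotShift d a η) p (EuclideanSpace.single 0 1) := by
    rw [aeval_algEquiv]
    rfl
  rw [← hadd, ← rotShift.aeval_apply_single_zero ha η hp, ← hu]
  calc
    _ ≤ ‖aeval u p (EuclideanSpace.single 0 1)‖ := PiLp.norm_apply_le _ 0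
    _ ≤ ‖aeval u p‖ * ‖EuclideanSpace.single (0 : Fin (d + 2)) (1 : ℂ)‖ := (aeval u p).le_opNorm _
    _ = ‖aeval u p‖ := by simp
    _ ≤ maxMod p 1 :=
      norm_aeval_le_maxMod_of_mem_unitary (rotShift.toContinuousLinearMap_mem_unitary ha hη) p

theorem maxMod_add_mul_norm_coeff_zero_le {N : ℕ} (hN : 2 ≤ N) {p : ℂ[X]} (hp : p.natDegree ≤ N)
    {R : ℝ} (hR : 1 ≤ R) :
    maxMod p R + (R ^ N - R ^ (N - 2)) * ‖p.coeff 0‖ ≤ R ^ N * maxMod p 1 := by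
  obtain ⟨d, rfl⟩ := Nat.exists_eq_add_of_le' hN
  have hR₀ : 0 < R := one_pos.trans_le hR
  have hdeg : (reflect (d + 2) p).natDegree ≤ d + 2 :=
    natDegree_reflect_le.trans (max_le le_rfl hp)
  obtain ⟨a, ha, hmax⟩ := exists_norm_eval_eq_maxMod (reflect (d + 2) p) (inv_pos.2 hR₀).le
  have hreflect :=
    norm_eval_add_mul_norm_coeff_le_maxMod hN hdeg (ha.trans_le (inv_le_one_of_one_le₀ hR))
  rw [hmax, ha, maxMod_reflect hp (inv_pos.2 hR₀), inv_inv, maxMod_reflect hp one_pos, one_pow,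
    one_mul, inv_one, coeff_reflect, revAt_le le_rfl, Nat.sub_self] at hreflect
  calc
    _ = R ^ (d + 2) * (R⁻¹ ^ (d + 2) * maxMod p R + (1 - R⁻¹ ^ 2) * ‖p.coeff 0‖) := by
      rw [Nat.add_sub_cancel, inv_pow, inv_pow]
      field_simp
      ring
    _ ≤ R ^ (d + 2) * maxMod p 1 := by gcongr

section LogDerivative

lemma two_mul_re_div_sub {z w : ℂ} (h : z ≠ w) :
    2 * (z / (z - w)).re = 1 + (‖z‖ ^ 2 - ‖w‖ ^ 2) / ‖z - w‖ ^ 2 := by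
  have hne : Complex.normSq (z - w) ≠ 0 := Complex.normSq_eq_zero.not.2 (sub_ne_zero.2 h)
  rw [Complex.div_re, ← add_div, Complex.sq_norm, Complex.sq_norm, Complex.sq_norm,
    ← mul_div_assoc, one_add_div hne]
  congr 1
  simp only [Complex.normSq_apply, Complex.sub_re, Complex.sub_im]
  ring

lemma two_mul_re_mul_derivative_div {p : ℂ[X]} {z : ℂ} (hz : p.eval z ≠ 0) :
    2 * (z * p.derivative.eval z / p.eval z).re =
      p.natDegree + (p.roots.map fun w => (‖z‖ ^ 2 - ‖w‖ ^ 2) / ‖z - w‖ ^ 2).sum := by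
  have hsplits := IsAlgClosed.splits p
  have hsum : (z * p.derivative.eval z / p.eval z).re =
      (p.roots.map fun w => (z / (z - w)).re).sum := by
    rw [mul_div_assoc, hsplits.eval_derivative_div_eval_of_ne_zero hz,
      ← Multiset.sum_map_mul_left]
    simp only [mul_one_div]
    rw [← Complex.coe_reAddGroupHom, map_multiset_sum, Multiset.map_map]
    rfl
  have hterm : ∀ w ∈ p.roots,
      2 * (z / (z - w)).re = 1 + (‖z‖ ^ 2 - ‖w‖ ^ 2) / ‖z - w‖ ^ 2 := fun w hw =>
    two_mul_re_div_sub fun hzw => hz (hzw ▸ isRoot_of_mem_roots hw)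
  rw [hsum, ← Multiset.sum_map_mul_left, Multiset.map_congr rfl hterm, Multiset.sum_map_add,
    Multiset.map_const', Multiset.sum_replicate, nsmul_one, hsplits.natDegree_eq_card_roots]

end LogDerivative

section ErdosLax

variable {p : ℂ[X]} {n : ℕ}

lemma norm_le_norm_sub_of_two_mul_re_le {y : ℂ} {t : ℝ} (ht : 0 ≤ t) (hy : 2 * y.re ≤ t) :
    ‖y‖ ≤ ‖(t : ℂ) - y‖ := by
  rw [← sq_le_sq₀ (norm_nonneg _) (norm_nonneg _), Complex.sq_norm, Complex.sq_norm,
    Complex.normSq_apply, Complex.normSq_apply]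
  simp only [Complex.sub_re, Complex.sub_im, Complex.ofReal_re, Complex.ofReal_im]
  nlinarith

lemma norm_mul_derivative_le_of_norm_le_norm_roots (hp : p.natDegree ≤ n) {z : ℂ}
    (hroots : ∀ w, p.IsRoot w → ‖z‖ ≤ ‖w‖) :
    ‖z * p.derivative.eval z‖ ≤ ‖n * p.eval z - z * p.derivative.eval z‖ := by
  by_cases hz : p.eval z = 0
  · rw [hz, mul_zero, zero_sub, norm_neg]
  have hre : 2 * (z * p.derivative.eval z / p.eval z).re ≤ n := by
    have hsum : (p.roots.map fun w => (‖z‖ ^ 2 - ‖w‖ ^ 2) / ‖z - w‖ ^ 2).sum ≤ 0 := by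
      refine (Multiset.sum_map_le_sum_map _ (fun _ => 0) fun w hw => ?_).trans_eq (by simp)
      have := hroots w (isRoot_of_mem_roots hw)
      exact div_nonpos_of_nonpos_of_nonneg (sub_nonpos.2 (by gcongr)) (by positivity)
    rw [two_mul_re_mul_derivative_div hz]
    have : (p.natDegree : ℝ) ≤ n := by exact_mod_cast hp
    linarith
  have hquot := norm_le_norm_sub_of_two_mul_re_le n.cast_nonneg hre
  rw [Complex.ofReal_natCast, sub_div' hz, norm_div, norm_div] at hquot
  exact (div_le_div_iff_of_pos_right (norm_pos_iff.2 hz)).1 hquot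

lemma norm_add_norm_le_of_ball_subset_closedBall {x y : ℂ} {R : ℝ} (hx : ‖x‖ ≤ R)
    (h : ball x ‖y‖ ⊆ closedBall 0 R) : ‖x‖ + ‖y‖ ≤ R := by
  rcases eq_or_ne y 0 with rfl | hy
  · simpa using hx
  obtain ⟨c, hc, hadd⟩ := exists_norm_eq_one_norm_add_mul x y
  have hclosed : closedBall x ‖y‖ ⊆ closedBall 0 R := by
    rw [← closure_ball x (norm_ne_zero_iff.2 hy)]
    exact isClosed_closedBall.closure_subset_iff.2 h
  have hmem : x + c * y ∈ closedBall x ‖y‖ := by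
    rw [mem_closedBall_iff_norm, add_sub_cancel_left, norm_mul, hc, one_mul]
  rw [← hadd]
  exact mem_closedBall_zero_iff.1 (hclosed hmem)

theorem norm_mul_derivative_add_norm_sub_le (hp : p.natDegree ≤ n) (z : ℂ) :
    ‖z * p.derivative.eval z‖ + ‖n * p.eval z - z * p.derivative.eval z‖ ≤
      n * maxMod p ‖z‖ := by
  rcases n.eq_zero_or_pos with rfl | hn
  · simp [derivative_of_natDegree_zero (Nat.le_zero.1 hp)]
  have hn₀ : (n : ℂ) ≠ 0 := Nat.cast_ne_zero.2 hn.ne'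
  -- If `|t / n|` exceeds the maximum, then `p - t / n` has no zero in the disc, so the previous
  -- inequality applies to it.
  have hball : ball (n * p.eval z - z * p.derivative.eval z) ‖z * p.derivative.eval z‖ ⊆
      closedBall 0 (n * maxMod p ‖z‖) := by
    intro t ht
    rw [mem_ball', dist_eq_norm] at ht
    by_contra hout
    have hc : maxMod p ‖z‖ < ‖t / n‖ := by
      rw [mem_closedBall_zero_iff, not_le] at hout
      rwa [norm_div, Complex.norm_natCast, lt_div_iff₀' (by positivity)]
    have hroots : ∀ w, (p - C (t / n)).IsRoot w → ‖z‖ ≤ ‖w‖ := by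
      intro w hw
      rw [IsRoot, eval_sub, eval_C, sub_eq_zero] at hw
      by_contra! hwz
      exact hc.not_ge (hw ▸ norm_eval_le_maxMod_of_norm_le hwz.le)
    have hle := norm_mul_derivative_le_of_norm_le_norm_roots
      ((natDegree_sub_C (p := p)).trans_le hp) hroots
    rw [derivative_sub, derivative_C, sub_zero, eval_sub, eval_C, mul_sub, mul_div_cancel₀ _ hn₀,
      sub_right_comm] at hle
    exact hle.not_gt ht
  rw [add_comm]
  by_cases hz : z * p.derivative.eval z = 0
  · rw [hz, sub_zero, norm_zero, add_zero, norm_mul, Complex.norm_natCast]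
    gcongr
    exact norm_eval_le_maxMod rfl
  · refine norm_add_norm_le_of_ball_subset_closedBall ?_ hball
    exact mem_closedBall_zero_iff.1 (hball (mem_ball_self (norm_pos_iff.2 hz)))

theorem mul_maxMod_derivative_le_of_le_norm_roots (hp : p.natDegree ≤ n) {r : ℝ} (hr : 0 ≤ r)
    (hroots : ∀ w, p.IsRoot w → r ≤ ‖w‖) :
    r * maxMod (derivative p) r ≤ n / 2 * maxMod p r := by
  obtain ⟨z, rfl, hz⟩ := exists_norm_eval_eq_maxMod (derivative p) hr
  have hle := norm_mul_derivative_le_of_norm_le_norm_roots hp hroots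
  have hadd := norm_mul_derivative_add_norm_sub_le hp z
  rw [← hz, ← norm_mul]
  linarith

end ErdosLax

section AnkenyRivlin

variable {p : ℂ[X]} {R : ℝ}

lemma maxMod_le_of_maxMod_derivative_le {r : ℝ} (hr : 0 < r) (hrR : r ≤ R) {B B' : ℝ → ℝ}
    (hB : ∀ t, HasDerivAt B (B' t) t) (hstart : maxMod p r ≤ B r)
    (hbound : ∀ t ∈ Set.Ico r R, maxMod (derivative p) t ≤ B' t) : maxMod p R ≤ B R := by
  have hR : 0 < R := hr.trans_le hrR
  refine maxMod_le hR.le fun w hw => ?_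
  obtain ⟨z, hz, rfl⟩ : ∃ z : ℂ, ‖z‖ = 1 ∧ R * z = w := by
    refine ⟨w / R, ?_, mul_div_cancel₀ w (Complex.ofReal_ne_zero.2 hR.ne')⟩
    rw [norm_div, hw, Complex.norm_of_nonneg hR.le, div_self hR.ne']
  have hnorm {t : ℝ} (ht : r ≤ t) : ‖(t : ℂ) * z‖ = t := by
    rw [norm_mul, hz, mul_one, Complex.norm_of_nonneg (hr.le.trans ht)]
  have hderiv (t : ℝ) :
      HasDerivAt (fun t : ℝ => p.eval (t * z)) (p.derivative.eval (t * z) * z) t :=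
    HasDerivAt.comp_ofReal (e := fun x => p.eval (x * z))
      ((p.hasDerivAt (t * z)).comp (t : ℂ) (h := fun x => x * z) (hasDerivAt_mul_const z))
  refine image_norm_le_of_norm_deriv_right_le_deriv_boundary
    (fun t _ => (hderiv t).continuousAt.continuousWithinAt)
    (fun t _ => (hderiv t).hasDerivWithinAt)
    ((norm_eval_le_maxMod (hnorm le_rfl)).trans hstart) hB (fun t ht => ?_) ⟨hrR, le_rfl⟩
  rw [norm_mul, hz, mul_one]
  exact (norm_eval_le_maxMod (hnorm ht.1)).trans (hbound t ht)

lemma maxMod_derivative_add_mul_norm_coeff_one_le {n : ℕ} (hn : 2 ≤ n) (hp : p.natDegree ≤ n + 1)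
    (hR : 1 ≤ R) :
    maxMod (derivative p) R + (R ^ n - R ^ (n - 2)) * ‖p.coeff 1‖ ≤
      R ^ n * maxMod (derivative p) 1 := by
  have hgrowth := maxMod_add_mul_norm_coeff_zero_le hn
    ((natDegree_derivative_le p).trans (Nat.sub_le_of_le_add hp)) hR
  rwa [coeff_derivative, zero_add, Nat.cast_zero, zero_add, mul_one] at hgrowth

lemma maxMod_derivative_add_mul_norm_coeff_one_le_of_one_le_norm_roots {n : ℕ} (hn : 2 ≤ n)
    (hp : p.natDegree ≤ n + 1) (hroots : ∀ w, p.IsRoot w → 1 ≤ ‖w‖) (hR : 1 ≤ R) :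
    maxMod (derivative p) R + (R ^ n - R ^ (n - 2)) * ‖p.coeff 1‖ ≤
      R ^ n * (((n + 1 : ℕ) : ℝ) / 2 * maxMod p 1) := by
  have hlax := mul_maxMod_derivative_le_of_le_norm_roots hp zero_le_one hroots
  rw [one_mul] at hlax
  exact (maxMod_derivative_add_mul_norm_coeff_one_le hn hp hR).trans (by gcongr)

lemma hasDerivAt_pow_succ_sub_one_div (m : ℕ) (t : ℝ) :
    HasDerivAt (fun t : ℝ => (t ^ (m + 1) - 1) / ((m : ℝ) + 1)) (t ^ m) t := by
  refine (((hasDerivAt_pow (m + 1) t).sub_const 1).div_const _).congr_deriv ?_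
  push_cast
  exact mul_div_cancel_left₀ _ (by positivity)

theorem maxMod_add_mul_norm_coeff_one_le_of_one_le_norm_roots {n : ℕ} (hn : 2 < n)
    (hp : p.natDegree ≤ n) (hroots : ∀ w, p.IsRoot w → 1 ≤ ‖w‖) (hR : 1 ≤ R) :
    maxMod p R + ‖p.coeff 1‖ * ((R ^ n - 1) / n - (R ^ (n - 2) - 1) / ((n : ℝ) - 2)) ≤
      (R ^ n + 1) / 2 * maxMod p 1 := by
  obtain ⟨d, rfl⟩ : ∃ d, n = d + 3 := ⟨n - 3, by omega⟩
  let F (m : ℕ) (t : ℝ) : ℝ := (t ^ (m + 1) - 1) / ((m : ℝ) + 1)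
  have hB (t : ℝ) : HasDerivAt
      (fun t => maxMod p 1 + (d + 3) / 2 * maxMod p 1 * F (d + 2) t -
        ‖p.coeff 1‖ * (F (d + 2) t - F d t))
      ((d + 3) / 2 * maxMod p 1 * t ^ (d + 2) - ‖p.coeff 1‖ * (t ^ (d + 2) - t ^ d)) t :=
    (((hasDerivAt_pow_succ_sub_one_div _ t).const_mul _).const_add _).sub
      (((hasDerivAt_pow_succ_sub_one_div _ t).sub
        (hasDerivAt_pow_succ_sub_one_div _ t)).const_mul _)
  have hbound (t : ℝ) (ht : 1 ≤ t) : maxMod (derivative p) t ≤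
      (d + 3) / 2 * maxMod p 1 * t ^ (d + 2) - ‖p.coeff 1‖ * (t ^ (d + 2) - t ^ d) := by
    have := maxMod_derivative_add_mul_norm_coeff_one_le_of_one_le_norm_roots
      (Nat.le_add_left 2 d) hp hroots ht
    rw [Nat.add_sub_cancel] at this
    push_cast at this
    linarith
  have hle := maxMod_le_of_maxMod_derivative_le one_pos hR hB (by simp [F])
    fun t ht => hbound t ht.1
  have hF : (d + 3) * F (d + 2) R = R ^ (d + 3) - 1 := by
    simp only [F]
    push_cast
    field_simp
    ring
  have hlen : F (d + 2) R - F d R =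
      (R ^ (d + 3) - 1) / (d + 3 : ℕ) - (R ^ (d + 3 - 2) - 1) / ((d + 3 : ℕ) - 2) := by
    simp only [F, Nat.reduceSubDiff]
    push_cast
    ring
  rw [hlen] at hle
  linear_combination hle + maxMod p 1 / 2 * hF

end AnkenyRivlin

section Dubinin

-- With `x = exp (-2 t)` this is the subadditivity of `tanh` on `[0, ∞)`.
lemma one_sub_mul_div_one_add_mul_le {x y : ℝ} (hx : x ∈ unitInterval) (hy : y ∈ unitInterval) :
    (1 - x * y) / (1 + x * y) ≤ (1 - x) / (1 + x) + (1 - y) / (1 + y) := by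
  obtain ⟨hx₀, hx₁⟩ := hx
  obtain ⟨hy₀, hy₁⟩ := hy
  rw [div_add_div _ _ (by positivity) (by positivity),
    div_le_div_iff₀ (by positivity) (by positivity)]
  have : 0 ≤ (1 - x) * (1 - y) * (1 - x * y) := by
    have := mul_le_one₀ hx₁ hy₀ hy₁
    apply_rules [mul_nonneg, sub_nonneg.2]
  linarith

lemma one_sub_prod_div_one_add_prod_le {s : Multiset ℝ} (hs : ∀ x ∈ s, x ∈ unitInterval) :
    (1 - s.prod) / (1 + s.prod) ≤ (s.map fun x => (1 - x) / (1 + x)).sum := by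
  induction s using Multiset.induction_on with
  | empty => simp
  | cons x s ih =>
    obtain ⟨hx, hs⟩ := Multiset.forall_mem_cons.1 hs
    rw [Multiset.prod_cons, Multiset.map_cons, Multiset.sum_cons]
    exact (one_sub_mul_div_one_add_mul_le hx
      (multiset_prod_mem (S := unitInterval.submonoid) s hs)).trans (by gcongr; exact ih hs)

/-- The factor `n + (rⁿ|aₙ| - |a₀|) / (rⁿ|aₙ| + |a₀|)` in Dubinin's inequality for a polynomial
`P = ∑ aⱼ zʲ` of degree `n` with all its zeros in `|z| ≤ r`. -/
noncomputable def dubininFactor (P : ℂ[X]) (r : ℝ) : ℝ :=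
  P.natDegree + (r ^ P.natDegree * ‖P.leadingCoeff‖ - ‖P.coeff 0‖) /
    (r ^ P.natDegree * ‖P.leadingCoeff‖ + ‖P.coeff 0‖)

variable {p : ℂ[X]} {r : ℝ}

lemma dubininFactor_nonneg (hp : 0 < p.natDegree) (hr : 0 ≤ r) : 0 ≤ dubininFactor p r := by
  have hdeg : (1 : ℝ) ≤ p.natDegree := by exact_mod_cast hp
  have hratio : -1 ≤ (r ^ p.natDegree * ‖p.leadingCoeff‖ - ‖p.coeff 0‖) /
      (r ^ p.natDegree * ‖p.leadingCoeff‖ + ‖p.coeff 0‖) := by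
    refine neg_le.1 ?_
    rw [← neg_div, neg_sub]
    refine div_le_one_of_le₀ ?_ (by positivity)
    exact (sub_le_self _ (by positivity)).trans (le_add_of_nonneg_left (by positivity))
  unfold dubininFactor
  linarith

lemma prod_roots_norm_div (hp : p ≠ 0) (r : ℝ) :
    (p.roots.map fun w => ‖w‖ / r).prod = ‖p.coeff 0‖ / (r ^ p.natDegree * ‖p.leadingCoeff‖) := by
  have hsplits := IsAlgClosed.splits p
  have hnorm : ‖p.roots.prod‖ = (p.roots.map norm).prod := map_multiset_prod normHom p.roots
  rw [Multiset.prod_map_div, Multiset.map_const', Multiset.prod_replicate,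
    ← hsplits.natDegree_eq_card_roots, ← hnorm,
    hsplits.coeff_zero_eq_leadingCoeff_mul_prod_roots, norm_mul, norm_mul, norm_pow, norm_neg,
    norm_one, one_pow, one_mul, mul_comm (r ^ _),
    mul_div_mul_left _ _ (norm_ne_zero_iff.2 (leadingCoeff_ne_zero.2 hp))]

lemma dubininFactor_eq (hp : p ≠ 0) (hr : 0 < r) :
    dubininFactor p r = p.natDegree +
      (1 - (p.roots.map fun w => ‖w‖ / r).prod) / (1 + (p.roots.map fun w => ‖w‖ / r).prod) := by
  have hY : 0 < r ^ p.natDegree * ‖p.leadingCoeff‖ :=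
    mul_pos (pow_pos hr _) (norm_pos_iff.2 (leadingCoeff_ne_zero.2 hp))
  rw [dubininFactor, prod_roots_norm_div hp, one_sub_div hY.ne', one_add_div hY.ne',
    div_div_div_cancel_right₀ hY.ne']

lemma one_sub_div_one_add_norm_div_le {z w : ℂ} (hwz : ‖w‖ ≤ ‖z‖) (hne : z ≠ w) :
    (1 - ‖w‖ / ‖z‖) / (1 + ‖w‖ / ‖z‖) ≤ (‖z‖ ^ 2 - ‖w‖ ^ 2) / ‖z - w‖ ^ 2 := by
  have hz : 0 < ‖z‖ := (norm_nonneg z).lt_of_ne' fun hz =>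
    hne (by rw [norm_eq_zero.1 hz, norm_le_zero_iff.1 (hwz.trans_eq hz)])
  calc
    _ = (‖z‖ ^ 2 - ‖w‖ ^ 2) / (‖z‖ + ‖w‖) ^ 2 := by
      field_simp
      ring
    _ ≤ _ := by
      gcongr
      · exact sub_nonneg.2 (by gcongr)
      · exact pow_pos (norm_pos_iff.2 (sub_ne_zero.2 hne)) 2
      · exact norm_sub_le z w

lemma dubininFactor_div_two_mul_norm_eval_le {z : ℂ} (hz : z ≠ 0)
    (hroots : ∀ w, p.IsRoot w → ‖w‖ ≤ ‖z‖) :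
    dubininFactor p ‖z‖ / 2 * ‖p.eval z‖ ≤ ‖z * p.derivative.eval z‖ := by
  by_cases hpz : p.eval z = 0
  · rw [hpz, norm_zero, mul_zero]
    exact norm_nonneg _
  have hp : p ≠ 0 := fun hp => hpz (hp ▸ eval_zero)
  have hunit : ∀ x ∈ p.roots.map fun w => ‖w‖ / ‖z‖, x ∈ unitInterval :=
    Multiset.forall_mem_map_iff.2 fun w hw => ⟨by positivity,
      div_le_one_of_le₀ (hroots w (isRoot_of_mem_roots hw)) (norm_nonneg z)⟩
  have hsum : (p.roots.map fun w => (1 - ‖w‖ / ‖z‖) / (1 + ‖w‖ / ‖z‖)).sum ≤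
      (p.roots.map fun w => (‖z‖ ^ 2 - ‖w‖ ^ 2) / ‖z - w‖ ^ 2).sum :=
    Multiset.sum_map_le_sum_map _ _ fun w hw =>
      one_sub_div_one_add_norm_div_le (hroots w (isRoot_of_mem_roots hw)) fun hzw =>
        hpz (hzw ▸ isRoot_of_mem_roots hw)
  have hprod := one_sub_prod_div_one_add_prod_le hunit
  rw [Multiset.map_map] at hprod
  have hre : dubininFactor p ‖z‖ / 2 ≤ (z * p.derivative.eval z / p.eval z).re := by
    rw [dubininFactor_eq hp (norm_pos_iff.2 hz)]
    linarith [hprod.trans hsum, two_mul_re_mul_derivative_div hpz]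
  rw [← le_div_iff₀ (norm_pos_iff.2 hpz), ← norm_div]
  exact hre.trans (Complex.re_le_norm _)

theorem dubininFactor_div_two_mul_maxMod_le (hr : 0 < r) (hroots : ∀ w, p.IsRoot w → ‖w‖ ≤ r) :
    dubininFactor p r / 2 * maxMod p r ≤ r * maxMod (derivative p) r := by
  obtain ⟨z, rfl, hz⟩ := exists_norm_eval_eq_maxMod p hr.le
  rw [← hz]
  refine (dubininFactor_div_two_mul_norm_eval_le (norm_pos_iff.1 hr) hroots).trans ?_
  rw [norm_mul]
  gcongr
  exact norm_eval_le_maxMod rfl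

end Dubinin

theorem pow_mul_maxMod_one_add_le_of_norm_roots_le {n : ℕ} (hn : 2 < n) {p : ℂ[X]}
    (hp : p.natDegree = n) {k : ℝ} (hk : 1 ≤ k) (hroots : ∀ w, p.IsRoot w → ‖w‖ ≤ k) :
    k ^ n * maxMod p 1 + k ^ (n - 1) * ‖p.coeff (n - 1)‖ *
        ((k ^ n - 1) / n - (k ^ (n - 2) - 1) / ((n : ℝ) - 2)) ≤
      (k ^ n + 1) / 2 * maxMod p k := by
  have hk₀ : 0 < k := one_pos.trans_le hk
  have hkC : (k : ℂ) ≠ 0 := Complex.ofReal_ne_zero.2 hk₀.ne'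
  have hnorm : ‖(k : ℂ)‖ = k := Complex.norm_of_nonneg hk₀.le
  have hdeg : (p.comp (C (k : ℂ) * X)).natDegree = n := by
    rw [natDegree_comp, natDegree_C_mul_X _ hkC, mul_one, hp]
  have hne : p.comp (C (k : ℂ) * X) ≠ 0 := ne_zero_of_natDegree_gt (hn.trans_eq hdeg.symm)
  have hroots_comp (w : ℂ) (hw : (p.comp (C (k : ℂ) * X)).IsRoot w) : ‖w‖ ≤ 1 := by
    rw [IsRoot, eval_comp, eval_C_mul, eval_X] at hw
    have hle := hroots _ hw
    rwa [norm_mul, hnorm, mul_le_iff_le_one_right hk₀] at hle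
  have hle := maxMod_add_mul_norm_coeff_one_le_of_one_le_norm_roots hn
    ((reverse_natDegree_le _).trans hdeg.le)
    (fun w hw => inv_one.symm.trans_le (inv_le_norm_of_isRoot_reverse hne hroots_comp hw)) hk
  rw [reverse, hdeg, maxMod_reflect hdeg.le hk₀, maxMod_reflect hdeg.le one_pos, inv_one, one_pow,
    one_mul, maxMod_comp_C_mul_X p hkC (inv_pos.2 hk₀).le, maxMod_comp_C_mul_X p hkC zero_le_one,
    hnorm, mul_one, mul_inv_cancel₀ hk₀.ne', coeff_reflect, revAt_le (by omega),
    comp_C_mul_X_coeff, norm_mul, norm_pow, hnorm] at hle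
  rwa [mul_comm (k ^ (n - 1))]

theorem dubininFactor_div_mul_maxMod_add_le {n : ℕ} (hn : 2 < n) {p : ℂ[X]}
    (hp : p.natDegree = n) {k : ℝ} (hk : 1 ≤ k) (hroots : ∀ w, p.IsRoot w → ‖w‖ ≤ k) :
    dubininFactor p k / (2 * k ^ n) * maxMod p k + ‖p.coeff 1‖ * (1 - 1 / k ^ 2) ≤
      maxMod (derivative p) 1 := by
  obtain ⟨d, rfl⟩ : ∃ d, n = d + 3 := ⟨n - 3, by omega⟩
  have hk₀ : 0 < k := one_pos.trans_le hk
  have hdubinin := dubininFactor_div_two_mul_maxMod_le hk₀ hroots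
  have hgrowth := maxMod_derivative_add_mul_norm_coeff_one_le (Nat.le_add_left 2 d) hp.le hk
  calc
    _ = dubininFactor p k / 2 * maxMod p k / k ^ (d + 3) + ‖p.coeff 1‖ * (1 - 1 / k ^ 2) := by
      ring
    _ ≤ k * maxMod (derivative p) k / k ^ (d + 3) + ‖p.coeff 1‖ * (1 - 1 / k ^ 2) := by gcongr
    _ = (maxMod (derivative p) k + (k ^ (d + 2) - k ^ d) * ‖p.coeff 1‖) / k ^ (d + 2) := by
      field_simp
      ring
    _ ≤ maxMod (derivative p) 1 := (div_le_iff₀' (by positivity)).2 hgrowth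

theorem stmt_0 (n : ℕ) (hn : 2 < n) (P : Polynomial ℂ) (hdeg : P.natDegree = n)
    (k : ℝ) (hk : 1 ≤ k) (hroots : ∀ w : ℂ, P.IsRoot w → ‖w‖ ≤ k) :
    maxMod (Polynomial.derivative P) 1 ≥
      (1 / (1 + k ^ n)) *
          ((n : ℝ) + (k ^ n * ‖P.coeff n‖ - ‖P.coeff 0‖) /
              (k ^ n * ‖P.coeff n‖ + ‖P.coeff 0‖)) *
          maxMod P 1 +
        (‖P.coeff (n - 1)‖ / (k * (1 + k ^ n))) *
          ((n : ℝ) + (k ^ n * ‖P.coeff n‖ - ‖P.coeff 0‖) /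
              (k ^ n * ‖P.coeff n‖ + ‖P.coeff 0‖)) *
          ((k ^ n - 1) / (n : ℝ) - (k ^ (n - 2) - 1) / ((n : ℝ) - 2)) +
        ‖P.coeff 1‖ * (1 - 1 / k ^ 2) := by
  have hk₀ : 0 < k := one_pos.trans_le hk
  have hrev := pow_mul_maxMod_one_add_le_of_norm_roots_le hn hdeg hk hroots
  have hderiv := dubininFactor_div_mul_maxMod_add_le hn hdeg hk hroots
  have hS := dubininFactor_nonneg (by omega : 0 < P.natDegree) hk₀.le
  obtain ⟨d, rfl⟩ : ∃ d, n = d + 3 := ⟨n - 3, by omega⟩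
  rw [dubininFactor, leadingCoeff, hdeg] at hS hderiv
  generalize ((d + 3 : ℕ) : ℝ) + (k ^ (d + 3) * ‖P.coeff (d + 3)‖ - ‖P.coeff 0‖) /
    (k ^ (d + 3) * ‖P.coeff (d + 3)‖ + ‖P.coeff 0‖) = S at *
  generalize (k ^ (d + 3) - 1) / ((d + 3 : ℕ) : ℝ) -
    (k ^ (d + 3 - 2) - 1) / (((d + 3 : ℕ) : ℝ) - 2) = L at *
  calc
    _ = S / (2 * k ^ (d + 3)) * ((k ^ (d + 3) * maxMod P 1 +
          k ^ (d + 2) * ‖P.coeff (d + 3 - 1)‖ * L) / ((k ^ (d + 3) + 1) / 2)) +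
        ‖P.coeff 1‖ * (1 - 1 / k ^ 2) := by
      field_simp
      ring
    _ ≤ S / (2 * k ^ (d + 3)) * maxMod P k + ‖P.coeff 1‖ * (1 - 1 / k ^ 2) := by
      gcongr
      exact (div_le_iff₀' (by positivity)).2 hrev
    _ ≤ maxMod (derivative P) 1 := hderiv
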